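/- Let U be a finite-dimensional 𝔽₂-vector space and let 𝒞 be a set of nonzero linear forms on U with dim_{𝔽₂} span(𝒞) ≥ 3. Then there exists a homomorphism from F := K4⁻ × F* to the cut template R(U,𝒞). -/

import Mathlib

open scoped Classical

/-- A collection of finite edge sets is a 3-graph if every edge has exactly 3 vertices. -/
def IsThreeGraph {α : Type*} (H : Set (Finset α)) : Prop := ∀ e ∈ H, e.card = 3

/-- `φ` is a homomorphism of 3-graphs from `G` to `H`: the image of every edge of `G`
is a 3-element set that is an edge of `H`. -/
def IsHomOn {α β : Type*} (G : Set (Finset α)) (H : Set (Finset β)) (φ : α → β) : Prop :=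
  ∀ e ∈ G, (e.image φ).card = 3 ∧ e.image φ ∈ H

/-- `H` contains a subgraph isomorphic to `G`. -/
def ContainsCopy {α β : Type*} (G : Set (Finset α)) (H : Set (Finset β)) : Prop :=
  ∃ φ : α → β, Function.Injective φ ∧ ∀ e ∈ G, e.image φ ∈ H

/-- `K4⁻`, on vertices `a=0, b=1, c=2, d=3`, with edges `abc, abd, acd`. -/
def K4minus : Set (Finset (Fin 4)) := {{0,1,2}, {0,1,3}, {0,2,3}}

/-- `F*`, on vertices `1,…,7` (represented by `0,…,6`), with edges `123, 124, 345, 156, 257`. -/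
def Fstar : Set (Finset (Fin 7)) := {{0,1,2}, {0,1,3}, {2,3,4}, {0,4,5}, {1,4,6}}

/-- The categorical product of two 3-graphs: a 3-element set of pairs is an edge iff
its set of first coordinates is an edge of `G` and its set of second coordinates is an
edge of `H`. -/
def ProdGraph {α β : Type*} (G : Set (Finset α)) (H : Set (Finset β)) :
    Set (Finset (α × β)) :=
  {e | e.card = 3 ∧ e.image Prod.fst ∈ G ∧ e.image Prod.snd ∈ H}

/-- The 3-graph `F := K4⁻ × F*`. -/
def F : Set (Finset (Fin 4 × Fin 7)) := ProdGraph K4minus Fstar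

/-- The cut template `R(U, 𝒞)`: apex vertices indexed by `𝒞`, bottom vertices `U`, and
edges `{a_c, u, v}` for `c ∈ 𝒞` and distinct `u, v ∈ U` with `c (u + v) = 1`. -/
def CutTemplate (U : Type*) [AddCommGroup U] [Module (ZMod 2) U]
    (C : Set (U →ₗ[ZMod 2] ZMod 2)) : Set (Finset (↥C ⊕ U)) :=
  {e | ∃ (c : ↥C) (u v : U), u ≠ v ∧ (c : U →ₗ[ZMod 2] ZMod 2) (u + v) = 1 ∧
      e = {Sum.inl c, Sum.inr u, Sum.inr v}}

/-!
In every edge of `K4⁻ × F*` exactly one vertex lies over the vertex `a` of `K4⁻`; these vertices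
become apexes and all others go to the bottom `U`. It remains to choose the apexes and the bottom
vertices as functions of the `F*`-coordinate alone, so that in every edge of `F*` each of the three
vertices can serve as the apex. Three forms and the vectors of `𝔽₂³` suffice for this. As
independent forms jointly take all values, the solution over `𝔽₂³` lifts to `U`.
-/

section LinearAlgebra

theorem exists_linearIndependent_fin_of_le_rank_span {K M : Type*} [DivisionRing K]
    [AddCommGroup M] [Module K M] {s : Set M} {n : ℕ}
    (hn : n ≤ Module.rank K (Submodule.span K s)) :
    ∃ v : Fin n → s, LinearIndependent K fun i => (v i : M) := by
  obtain ⟨b, hbs, hspan, hb⟩ := exists_linearIndependent K s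
  rw [← hspan, rank_span_set hb] at hn
  obtain ⟨f⟩ : Nonempty (Fin n ↪ b) := Cardinal.lift_mk_le'.mp (by simpa using hn)
  exact ⟨Set.inclusion hbs ∘ f, hb.comp f f.injective⟩

theorem surjective_pi_of_linearIndependent {ι K V : Type*} [Finite ι] [Field K]
    [AddCommGroup V] [Module K V] {c : ι → V →ₗ[K] K} (hc : LinearIndependent K c) :
    Function.Surjective (LinearMap.pi c) := by
  have hfun : LinearIndependent K fun i => (c i : V → K) :=
    hc.map' (LinearMap.ltoFun K V K K) (LinearMap.ker_eq_bot.mpr DFunLike.coe_injective)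
  rw [← LinearMap.range_eq_top, ← span_flip_eq_top_iff_linearIndependent.mpr hfun]
  exact (Submodule.span_eq (LinearMap.range (LinearMap.pi c))).symm

end LinearAlgebra

section Homomorphisms

variable {α β : Type*} {G : Set (Finset α)} {H : Set (Finset β)}

theorem IsHomOn.injOn {φ : α → β} (hφ : IsHomOn G H φ) (hG : IsThreeGraph G) {e : Finset α}
    (he : e ∈ G) : Set.InjOn φ e :=
  Finset.card_image_iff.mp ((hφ e he).1.trans (hG e he).symm)

theorem IsThreeGraph.isHomOn (hH : IsThreeGraph H) {φ : α → β}
    (hφ : ∀ e ∈ G, e.image φ ∈ H) : IsHomOn G H φ :=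
  fun e he => ⟨hH _ (hφ e he), hφ e he⟩

theorem isThreeGraph_prodGraph : IsThreeGraph (ProdGraph G H) := fun _ he => he.1

theorem isHomOn_fst_prodGraph (hG : IsThreeGraph G) : IsHomOn (ProdGraph G H) G Prod.fst :=
  hG.isHomOn fun _ he => he.2.1

theorem isHomOn_snd_prodGraph (hH : IsThreeGraph H) : IsHomOn (ProdGraph G H) H Prod.snd :=
  hH.isHomOn fun _ he => he.2.2

end Homomorphisms

section ExactTransversals

variable {α β : Type*} {G : Set (Finset α)} {H : Set (Finset β)}

/-- `A` is an exact transversal of the hypergraph `G` if every edge has exactly one vertex in `A`.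
The vertices of an exact transversal are the candidates for the apexes of a cut template. -/
def IsExactTransversal (G : Set (Finset α)) (A : Set α) : Prop :=
  ∀ e ∈ G, ∃! x, x ∈ e ∧ x ∈ A

theorem IsExactTransversal.preimage {B : Set β} (hB : IsExactTransversal H B) {φ : α → β}
    (hφ : IsHomOn G H φ) (hG : IsThreeGraph G) : IsExactTransversal G (φ ⁻¹' B) := by
  intro e he
  obtain ⟨y, ⟨hy, hyB⟩, hunique⟩ := hB _ (hφ e he).2
  obtain ⟨x, hx, rfl⟩ := Finset.mem_image.mp hy
  refine ⟨x, ⟨hx, hyB⟩, fun z ⟨hz, hzB⟩ => hφ.injOn hG he hz hx ?_⟩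
  exact hunique _ ⟨Finset.mem_image_of_mem φ hz, hzB⟩

theorem IsExactTransversal.exists_eq_insert {A : Set α} (hA : IsExactTransversal G A)
    (hG : IsThreeGraph G) {e : Finset α} (he : e ∈ G) :
    ∃ x y z, x ∈ A ∧ y ∉ A ∧ z ∉ A ∧ x ≠ y ∧ x ≠ z ∧ y ≠ z ∧ e = {x, y, z} := by
  obtain ⟨x, ⟨hx, hxA⟩, hunique⟩ := hA e he
  obtain ⟨y, z, hyz, herase⟩ := Finset.card_eq_two.mp
    ((Finset.card_erase_of_mem hx).trans (congrArg (· - 1) (hG e he)))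
  have notMem {w : α} (hw : w ∈ e.erase x) : w ∉ A := fun hwA =>
    Finset.ne_of_mem_erase hw (hunique w ⟨Finset.mem_of_mem_erase hw, hwA⟩)
  have hy : y ∈ e.erase x := by simp [herase]
  have hz : z ∈ e.erase x := by simp [herase]
  exact ⟨x, y, z, hxA, notMem hy, notMem hz, (Finset.ne_of_mem_erase hy).symm,
    (Finset.ne_of_mem_erase hz).symm, hyz, by rw [← herase, Finset.insert_erase hx]⟩

end ExactTransversals

section CutLabellings

variable {α β U W : Type*} {G : Set (Finset α)} {H : Set (Finset β)}
  [AddCommGroup U] [Module (ZMod 2) U] [AddCommGroup W] [Module (ZMod 2) W]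

/-- A cut labelling of the hypergraph `G` attaches to each vertex `x` a linear form `c x` and a
vector `v x` such that, for all distinct `x, y, z` in an edge, the form of `x` separates the vectors
of `y` and `z`. Thus any one vertex of an edge of a 3-graph may be sent to the apex of its form and
the other two to their vectors. -/
def IsCutLabelling (G : Set (Finset α)) (c : α → U →ₗ[ZMod 2] ZMod 2) (v : α → U) : Prop :=
  ∀ e ∈ G, ∀ x ∈ e, ∀ y ∈ e, ∀ z ∈ e, x ≠ y → x ≠ z → y ≠ z → c x (v y + v z) = 1

theorem IsCutLabelling.comp_isHomOn {c : β → U →ₗ[ZMod 2] ZMod 2} {v : β → U}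
    (h : IsCutLabelling H c v) {φ : α → β} (hφ : IsHomOn G H φ) (hG : IsThreeGraph G) :
    IsCutLabelling G (c ∘ φ) (v ∘ φ) := by
  intro e he x hx y hy z hz hxy hxz hyz
  have hinj := hφ.injOn hG he
  exact h _ (hφ e he).2 _ (Finset.mem_image_of_mem φ hx) _ (Finset.mem_image_of_mem φ hy)
    _ (Finset.mem_image_of_mem φ hz) (hinj.ne hx hy hxy) (hinj.ne hx hz hxz) (hinj.ne hy hz hyz)

theorem isCutLabelling_comp_linearMap {c : α → W →ₗ[ZMod 2] ZMod 2} {v : α → U}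
    {f : U →ₗ[ZMod 2] W} :
    IsCutLabelling G (fun x => c x ∘ₗ f) v ↔ IsCutLabelling G c (f ∘ v) := by
  simp only [IsCutLabelling, LinearMap.comp_apply, Function.comp_apply, map_add]

theorem isThreeGraph_cutTemplate {C : Set (U →ₗ[ZMod 2] ZMod 2)} :
    IsThreeGraph (CutTemplate U C) := by
  rintro _ ⟨c, u, w, huw, -, rfl⟩
  exact Finset.card_eq_three.mpr
    ⟨_, _, _, Sum.inl_ne_inr, Sum.inl_ne_inr, Sum.inr_injective.ne huw, rfl⟩

theorem mem_cutTemplate_of_apply_add_eq_one {C : Set (U →ₗ[ZMod 2] ZMod 2)} {c : C} {u w : U}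
    (h : (c : U →ₗ[ZMod 2] ZMod 2) (u + w) = 1) :
    {Sum.inl c, Sum.inr u, Sum.inr w} ∈ CutTemplate U C := by
  refine ⟨c, u, w, ?_, h, rfl⟩
  rintro rfl
  rw [map_add, CharTwo.add_self_eq_zero] at h
  exact zero_ne_one h

theorem IsCutLabelling.isHomOn_cutTemplate {C : Set (U →ₗ[ZMod 2] ZMod 2)} {c : α → C} {v : α → U}
    (h : IsCutLabelling G (fun x => c x) v) (hG : IsThreeGraph G) {A : Set α}
    (hA : IsExactTransversal G A) :
    IsHomOn G (CutTemplate U C) fun x => if x ∈ A then Sum.inl (c x) else Sum.inr (v x) := by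
  refine isThreeGraph_cutTemplate.isHomOn fun e he => ?_
  obtain ⟨x, y, z, hx, hy, hz, hxy, hxz, hyz, rfl⟩ := hA.exists_eq_insert hG he
  have hsep := h _ he x (by simp) y (by simp) z (by simp) hxy hxz hyz
  simp only [Finset.image_insert, Finset.image_singleton, if_pos hx, if_neg hy, if_neg hz]
  -- `IsHomOn` and `CutTemplate` build their finsets with different `DecidableEq` instances.
  convert mem_cutTemplate_of_apply_add_eq_one hsep

end CutLabellings

theorem isExactTransversal_k4minus : IsExactTransversal K4minus {0} := by
  rintro e (rfl | rfl | rfl) <;> exact ⟨0, by simp⟩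

theorem isThreeGraph_k4minus : IsThreeGraph K4minus := by
  rintro e (rfl | rfl | rfl) <;> rfl

theorem isThreeGraph_fstar : IsThreeGraph Fstar := by
  rintro e (rfl | rfl | rfl | rfl | rfl) <;> rfl

/-- The coordinate form of `𝔽₂³` attached to each vertex of `F*` in its cut labelling. -/
def fstarCoord : Fin 7 → Fin 3 := ![0, 0, 1, 1, 2, 2, 2]

/-- The vector of `𝔽₂³` attached to each vertex of `F*` in its cut labelling, found by solving
the fifteen conditions that the edges impose. -/
def fstarVector : Fin 7 → Fin 3 → ZMod 2 :=
  ![![1, 1, 1], ![1, 0, 1], ![0, 0, 1], ![0, 0, 0], ![1, 1, 0], ![0, 0, 0], ![0, 0, 0]]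

theorem isCutLabelling_fstar :
    IsCutLabelling Fstar (fun x => LinearMap.proj (fstarCoord x)) fstarVector := by
  simp only [IsCutLabelling, LinearMap.proj_apply]
  rintro e (rfl | rfl | rfl | rfl | rfl) <;> decide

theorem hom_F_to_rank_three_cut_template_general (U : Type*) [AddCommGroup U] [Module (ZMod 2) U]
    (C : Set (U →ₗ[ZMod 2] ZMod 2))
    (hrank : 3 ≤ Module.rank (ZMod 2) ↥(Submodule.span (ZMod 2) C)) :
    ∃ φ : Fin 4 × Fin 7 → ↥C ⊕ U, IsHomOn F (CutTemplate U C) φ := by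
  obtain ⟨c, hc⟩ := exists_linearIndependent_fin_of_le_rank_span (n := 3) hrank
  obtain ⟨v, hv⟩ := (surjective_pi_of_linearIndependent hc).comp_left fstarVector
  have hFstar : IsCutLabelling Fstar (fun y => c (fstarCoord y)) v := by
    simpa only [← hv, ← isCutLabelling_comp_linearMap, LinearMap.proj_pi]
      using isCutLabelling_fstar
  have hF : IsThreeGraph F := isThreeGraph_prodGraph
  have hapex : IsExactTransversal F (Prod.fst ⁻¹' {0}) :=
    isExactTransversal_k4minus.preimage (isHomOn_fst_prodGraph isThreeGraph_k4minus) hF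
  have hlabel := hFstar.comp_isHomOn (isHomOn_snd_prodGraph isThreeGraph_fstar) hF
  exact ⟨_, hlabel.isHomOn_cutTemplate (c := fun p => c (fstarCoord p.2)) hF hapex⟩

/-- If `𝒞` consists of nonzero linear forms and `dim span 𝒞 ≥ 3`, then there exists a
homomorphism from `F = K4⁻ × F*` to the cut template `R(U, 𝒞)`. -/
theorem hom_F_to_rank_three_cut_template (U : Type) [AddCommGroup U] [Module (ZMod 2) U]
    [FiniteDimensional (ZMod 2) U] (C : Set (U →ₗ[ZMod 2] ZMod 2))
    (hC : ∀ c ∈ C, c ≠ 0)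
    (hrank : 3 ≤ Module.finrank (ZMod 2) ↥(Submodule.span (ZMod 2) C)) :
    ∃ φ : Fin 4 × Fin 7 → ↥C ⊕ U, IsHomOn F (CutTemplate U C) φ := by
  refine hom_F_to_rank_three_cut_template_general U C ?_
  rw [← Module.finrank_eq_rank]
  exact_mod_cast hrank
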